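/- Let y_2 = x_2 − μ·x_1. Then v_2(y_2) = −b_2. -/

import Mathlib

/-- A normalized discrete valuation on a field `K`, recorded as a function
`v : K → ℤ`.  The value of `v` at `0` is irrelevant: all conditions below only
refer to nonzero elements (the convention `v 0 = ∞` being understood). -/
structure IsDiscVal {K : Type*} [Field K] (v : K → ℤ) : Prop where
  map_one : v 1 = 0
  map_mul : ∀ x y : K, x ≠ 0 → y ≠ 0 → v (x * y) = v x + v y
  min_le_add : ∀ x y : K, x ≠ 0 → y ≠ 0 → x + y ≠ 0 → min (v x) (v y) ≤ v (x + y)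
  exists_uniformizer : ∃ π : K, π ≠ 0 ∧ v π = 1

/-!
Put `z = μ * x₁` and `y = x₂ - z`. Expanding `x₂ ^ p = (y + z) ^ p` turns the two defining equations
into `y ^ p - y = -μ ^ p * x₁ + D(x₁, a) + z + p * D(y, z)`: the terms `μ ^ p * a` of the equations
for `x₂` and `z` cancel. Since `D` is homogeneous of degree `p` with integral coefficients, the
valuation of `D(x, y)` is at least `p` times the smaller of those of `x` and `y`, so the assumed
bounds make `μ ^ p * x₁` the dominant term on the right. As its valuation is negative,
`p * v y = v (y ^ p - y) = p * v μ + v x₁`, and likewise `p * v x₁ = v a`.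
-/

theorem ne_zero_of_pow_sub_self_ne_zero {R : Type*} [Ring R] {n : ℕ} (hn : n ≠ 0) {x : R}
    (h : x ^ n - x ≠ 0) : x ≠ 0 := by
  rintro rfl
  exact h (by rw [zero_pow hn, sub_zero])

section CarryPolynomial

variable {K : Type*} [Field K]

/-- The value `(x ^ p + y ^ p - (x + y) ^ p) / p` of the polynomial `D(X, Y)`, which is the carry in
the addition of Witt vectors of length two. It is computed by division in `K`, hence meaningful
only when `p ≠ 0` in `K`. -/
def wittCarry (p : ℕ) (x y : K) : K :=
  (x ^ p + y ^ p - (x + y) ^ p) / (p : K)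

theorem natCast_mul_wittCarry {p : ℕ} (hpK : (p : K) ≠ 0) (x y : K) :
    p * wittCarry p x y = x ^ p + y ^ p - (x + y) ^ p :=
  mul_div_cancel₀ _ hpK

theorem wittCarry_eq_neg_sum {p : ℕ} (hp : p.Prime) (hpK : (p : K) ≠ 0) (x y : K) :
    wittCarry p x y = -∑ k ∈ Finset.Ioo 0 p, x ^ k * y ^ (p - k) * ↑(p.choose k / p) := by
  rw [← mul_right_inj' hpK, natCast_mul_wittCarry hpK, add_pow_prime_eq' hp]
  ring

theorem artinSchreier_sub_mul_eq {p : ℕ} (hpK : (p : K) ≠ 0) {a μ x₁ x₂ : K}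
    (hx₁ : x₁ ^ p - x₁ = a) (hx₂ : x₂ ^ p - x₂ = μ ^ p * a + wittCarry p x₁ a) :
    (x₂ - μ * x₁) ^ p - (x₂ - μ * x₁) = -(μ ^ p * x₁) +
      (wittCarry p x₁ a + μ * x₁ + p * wittCarry p (x₂ - μ * x₁) (μ * x₁)) := by
  rw [natCast_mul_wittCarry hpK, sub_add_cancel, mul_pow]
  linear_combination hx₂ - μ ^ p * hx₁

end CarryPolynomial

theorem nsmul_strictMono_of_ne_zero {Γ : Type*} [LinearOrderedAddCommGroupWithTop Γ] {n : ℕ}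
    (hn : n ≠ 0) : StrictMono (fun a : Γ => n • a) := by
  intro a b hab
  obtain ⟨k, rfl⟩ := Nat.exists_eq_succ_of_ne_zero hn
  have hka : k • a ≠ ⊤ := LinearOrderedAddCommGroupWithTop.isAddUnit_iff.1
    ((LinearOrderedAddCommGroupWithTop.isAddUnit_iff.2 hab.ne_top).nsmul k)
  calc (k + 1) • a = k • a + a := succ_nsmul a k
    _ < k • a + b := (add_lt_add_iff_right_of_ne_top hka).2 hab
    _ ≤ k • b + b := by gcongr
    _ = (k + 1) • b := (succ_nsmul b k).symm

theorem nsmul_lt_self_of_neg {Γ : Type*} [LinearOrderedAddCommMonoidWithTop Γ] {c : Γ} {n : ℕ}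
    (hn : 1 < n) (hc : c < 0) : n • c < c := by
  obtain ⟨k, rfl⟩ := Nat.exists_eq_add_of_lt hn
  calc (1 + k + 1) • c = (1 + k) • c + c := succ_nsmul c _
    _ < 0 + c := (add_lt_add_iff_left_of_ne_top hc.ne_top).2 (nsmul_neg hc (by lia))
    _ = c := zero_add c

section CarryValuation

variable {R Γ : Type*} [LinearOrderedAddCommMonoidWithTop Γ]

theorem addValuation_natCast_nonneg [Ring R] (w : AddValuation R Γ) (n : ℕ) : 0 ≤ w (n : R) := by
  simpa using w.map_le_sum (s := Finset.range n) (f := fun _ => 1) fun _ _ => w.map_one.ge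

theorem addValuation_neg_of_pow_sub_self_neg [Ring R] (w : AddValuation R Γ) {p : ℕ} {y : R}
    (h : w (y ^ p - y) < 0) : w y < 0 := by
  contrapose! h
  exact w.map_le_sub (w.map_pow y p ▸ nsmul_nonneg h p) h

theorem nsmul_addValuation_eq_of_pow_sub_self_neg [Ring R] (w : AddValuation R Γ) {p : ℕ}
    (hp : 1 < p) {y : R} (h : w (y ^ p - y) < 0) : p • w y = w (y ^ p - y) := by
  have hlt : w (y ^ p) < w y :=
    w.map_pow y p ▸ nsmul_lt_self_of_neg hp (addValuation_neg_of_pow_sub_self_neg w h)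
  rw [w.map_sub_eq_of_lt_left hlt, w.map_pow]

theorem nsmul_le_addValuation_wittCarry [Field R] (w : AddValuation R Γ) {p : ℕ} (hp : p.Prime)
    (hpR : (p : R) ≠ 0) {x y : R} {c : Γ} (hx : c ≤ w x) (hy : c ≤ w y) :
    p • c ≤ w (wittCarry p x y) := by
  rw [wittCarry_eq_neg_sum hp hpR, w.map_neg]
  refine w.map_le_sum fun k hk => ?_
  have hkp : k ≤ p := (Finset.mem_Ioo.1 hk).2.le
  calc p • c = k • c + (p - k) • c + 0 := by rw [← add_nsmul, Nat.add_sub_cancel' hkp, add_zero]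
    _ ≤ k • w x + (p - k) • w y + w ((p.choose k / p : ℕ) : R) := by
      gcongr
      exact addValuation_natCast_nonneg w _
    _ = w (x ^ k * y ^ (p - k) * ↑(p.choose k / p)) := by
      rw [w.map_mul, w.map_mul, w.map_pow, w.map_pow]

end CarryValuation

section WittExtension

variable {K Γ : Type*} [Field K] [LinearOrderedAddCommGroupWithTop Γ] (w : AddValuation K Γ)
  {p : ℕ} {a μ x₁ x₂ : K}

theorem le_addValuation_of_artinSchreier (hp : 1 < p) (hx₁ : x₁ ^ p - x₁ = a) (hneg : w a < 0) :
    w a ≤ w x₁ := by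
  subst hx₁
  rw [← nsmul_addValuation_eq_of_pow_sub_self_neg w hp hneg]
  exact (nsmul_lt_self_of_neg hp (addValuation_neg_of_pow_sub_self_neg w hneg)).le

theorem addValuation_pow_mul_lt_wittCarry (hp : p.Prime) (hpK : (p : K) ≠ 0) (hx₁ : x₁ ^ p - x₁ = a)
    (hneg : w a < 0) (hμ : p • w μ + w x₁ < p • w a) :
    w (μ ^ p * x₁) < w (wittCarry p x₁ a) :=
  calc w (μ ^ p * x₁) = p • w μ + w x₁ := by rw [w.map_mul, w.map_pow]
    _ < p • w a := hμ
    _ ≤ w (wittCarry p x₁ a) := nsmul_le_addValuation_wittCarry w hp hpK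
      (le_addValuation_of_artinSchreier w hp.one_lt hx₁ hneg) le_rfl

theorem addValuation_eq_mul_of_witt (hp : p.Prime) (hpK : (p : K) ≠ 0)
    (hx₁ : x₁ ^ p - x₁ = a) (hx₂ : x₂ ^ p - x₂ = μ ^ p * a + wittCarry p x₁ a) (hneg : w a < 0)
    (hμ : p • w μ + w x₁ < p • w a) : w x₂ = w (μ * x₁) := by
  have hle : w (μ ^ p * a) ≤ w (μ ^ p * x₁) := by
    rw [w.map_mul, w.map_mul]
    gcongr
    exact le_addValuation_of_artinSchreier w hp.one_lt hx₁ hneg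
  have hval : w (x₂ ^ p - x₂) = w (μ ^ p * a) := by
    rw [hx₂, w.map_add_eq_of_lt_left]
    exact hle.trans_lt (addValuation_pow_mul_lt_wittCarry w hp hpK hx₁ hneg hμ)
  have hval_neg : w (x₂ ^ p - x₂) < 0 :=
    calc w (x₂ ^ p - x₂) ≤ w (μ ^ p * x₁) := hval.trans_le hle
      _ = p • w μ + w x₁ := by rw [w.map_mul, w.map_pow]
      _ < p • w a := hμ
      _ < 0 := nsmul_neg hneg hp.ne_zero
  refine (nsmul_strictMono_of_ne_zero hp.ne_zero).injective ?_
  calc p • w x₂ = w (μ ^ p * a) :=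
        (nsmul_addValuation_eq_of_pow_sub_self_neg w hp.one_lt hval_neg).trans hval
    _ = p • w μ + p • w x₁ := by
      subst hx₁
      rw [w.map_mul, w.map_pow, nsmul_addValuation_eq_of_pow_sub_self_neg w hp.one_lt hneg]
    _ = p • w (μ * x₁) := by rw [w.map_mul, nsmul_add]

theorem addValuation_pow_mul_lt_mul (hp : 1 < p) (hx₁ : x₁ ^ p - x₁ = a) (hneg : w a < 0)
    (hμ : p • w μ + w x₁ < p • w a) : w (μ ^ p * x₁) < w (μ * x₁) := by
  subst hx₁
  have hx₁_ne_top : w x₁ ≠ ⊤ := (addValuation_neg_of_pow_sub_self_neg w hneg).ne_top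
  have hpμ_neg : p • w μ < 0 := by
    rw [← add_lt_add_iff_left_of_ne_top hx₁_ne_top, zero_add]
    exact hμ.trans ((nsmul_lt_self_of_neg hp hneg).trans_le
      (le_addValuation_of_artinSchreier w hp rfl hneg))
  have hμ_neg : w μ < 0 := lt_of_not_ge fun h => (nsmul_nonneg h p).not_gt hpμ_neg
  rw [w.map_mul, w.map_mul, w.map_pow, add_lt_add_iff_left_of_ne_top hx₁_ne_top]
  exact nsmul_lt_self_of_neg hp hμ_neg

theorem addValuation_pow_mul_lt_natCast_mul_wittCarry (hp : p.Prime) (hpK : (p : K) ≠ 0)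
    (hx₁ : x₁ ^ p - x₁ = a) (hx₂ : x₂ ^ p - x₂ = μ ^ p * a + wittCarry p x₁ a) (hneg : w a < 0)
    (hμ : p • w μ + w x₁ < p • w a) (hE : w x₁ < w p + p • w x₁) :
    w (μ ^ p * x₁) < w (p * wittCarry p (x₂ - μ * x₁) (μ * x₁)) := by
  have hx₂z : w (μ * x₁) ≤ w (x₂ - μ * x₁) :=
    w.map_le_sub (addValuation_eq_mul_of_witt w hp hpK hx₁ hx₂ hneg hμ).ge le_rfl
  have hpμ_ne_top : p • w μ ≠ ⊤ := (LinearOrderedAddCommGroupWithTop.add_ne_top.1 hμ.ne_top).1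
  calc w (μ ^ p * x₁) = p • w μ + w x₁ := by rw [w.map_mul, w.map_pow]
    _ < p • w μ + (w p + p • w x₁) := (add_lt_add_iff_right_of_ne_top hpμ_ne_top).2 hE
    _ = w p + p • w (μ * x₁) := by rw [w.map_mul, nsmul_add, add_left_comm]
    _ ≤ w p + w (wittCarry p (x₂ - μ * x₁) (μ * x₁)) := by
      gcongr
      exact nsmul_le_addValuation_wittCarry w hp hpK hx₂z le_rfl
    _ = w (p * wittCarry p (x₂ - μ * x₁) (μ * x₁)) := (w.map_mul _ _).symm

theorem nsmul_addValuation_sub_mul_of_witt (hp : p.Prime) (hpK : (p : K) ≠ 0)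
    (hx₁ : x₁ ^ p - x₁ = a) (hx₂ : x₂ ^ p - x₂ = μ ^ p * a + wittCarry p x₁ a) (hneg : w a < 0)
    (hμ : p • w μ + w x₁ < p • w a) (hE : w x₁ < w p + p • w x₁) :
    p • w (x₂ - μ * x₁) = p • w μ + w x₁ := by
  have hlead : w (-(μ ^ p * x₁)) = p • w μ + w x₁ := by rw [w.map_neg, w.map_mul, w.map_pow]
  have hval : w ((x₂ - μ * x₁) ^ p - (x₂ - μ * x₁)) = p • w μ + w x₁ := by
    rw [artinSchreier_sub_mul_eq hpK hx₁ hx₂, w.map_add_eq_of_lt_left, hlead]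
    rw [w.map_neg]
    exact w.map_lt_add (w.map_lt_add (addValuation_pow_mul_lt_wittCarry w hp hpK hx₁ hneg hμ)
      (addValuation_pow_mul_lt_mul w hp.one_lt hx₁ hneg hμ))
      (addValuation_pow_mul_lt_natCast_mul_wittCarry w hp hpK hx₁ hx₂ hneg hμ hE)
  rw [← hval]
  refine nsmul_addValuation_eq_of_pow_sub_self_neg w hp.one_lt ?_
  exact hval.trans_lt (hμ.trans (nsmul_neg hneg hp.ne_zero))

end WittExtension

namespace IsDiscVal

variable {K : Type*} [Field K] {v : K → ℤ}

open Classical in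
/-- The additive valuation with values in `WithTop ℤ` given by a normalized discrete valuation: it
replaces the irrelevant value at `0` by `⊤`. -/
noncomputable def toAddValuation (hv : IsDiscVal v) : AddValuation K (WithTop ℤ) :=
  AddValuation.of (fun x => if x = 0 then ⊤ else (v x : WithTop ℤ))
    (if_pos rfl) (by simp [hv.map_one])
    (fun x y => by
      by_cases hx : x = 0
      · simp [hx]
      by_cases hy : y = 0
      · simp [hy]
      by_cases hxy : x + y = 0
      · simp [hxy]
      simpa [hx, hy, hxy] using hv.min_le_add x y hx hy hxy)
    (fun x y => by
      by_cases hx : x = 0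
      · simp [hx]
      by_cases hy : y = 0
      · simp [hy]
      simpa [hx, hy] using mod_cast hv.map_mul x y hx hy)

theorem toAddValuation_apply (hv : IsDiscVal v) {x : K} (hx : x ≠ 0) :
    hv.toAddValuation x = v x :=
  if_neg hx

theorem mul_map_eq_of_artinSchreier (hv : IsDiscVal v) {p : ℕ} (hp : 1 < p) {a x : K}
    (h : x ^ p - x = a) (ha : a ≠ 0) (hneg : v a < 0) : p * v x = v a := by
  subst h
  have hx : x ≠ 0 := ne_zero_of_pow_sub_self_ne_zero (by lia) ha
  have hval := nsmul_addValuation_eq_of_pow_sub_self_neg hv.toAddValuation hp (y := x)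
  simp only [hv.toAddValuation_apply ha, hv.toAddValuation_apply hx, ← WithTop.coe_nsmul,
    WithTop.coe_inj, nsmul_eq_mul] at hval
  exact hval (mod_cast hneg)

theorem sq_mul_map_sub_mul_of_witt [CharZero K] (hv : IsDiscVal v) {p : ℕ} (hp : p.Prime)
    {a μ x₁ x₂ : K} (ha : a ≠ 0) (hμ : μ ≠ 0) (hx₁ : x₁ ^ p - x₁ = a)
    (hx₂ : x₂ ^ p - x₂ = μ ^ p * a + wittCarry p x₁ a) (hneg : v a < 0)
    (hvp : -(p * v p) < (p - 1) * v a) (hvμ : p ^ 2 * v μ < (p ^ 2 - 1) * v a) :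
    x₂ - μ * x₁ ≠ 0 ∧ p ^ 2 * v (x₂ - μ * x₁) = p ^ 2 * v μ + v a := by
  have hpK : (p : K) ≠ 0 := Nat.cast_ne_zero.2 hp.ne_zero
  have hx₁0 : x₁ ≠ 0 := ne_zero_of_pow_sub_self_ne_zero hp.ne_zero (hx₁ ▸ ha)
  have hp_nonneg : (0 : ℤ) ≤ p := Int.natCast_nonneg p
  have hvx₁ : p * v x₁ = v a := hv.mul_map_eq_of_artinSchreier hp.one_lt hx₁ ha hneg
  have hlead : p * v μ + v x₁ < p * v a := lt_of_mul_lt_mul_left (by linarith) hp_nonneg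
  have hvp' : v x₁ < v p + p * v x₁ := lt_of_mul_lt_mul_left
    (by linear_combination hvp + (1 - (p : ℤ)) * hvx₁) hp_nonneg
  have hval := nsmul_addValuation_sub_mul_of_witt hv.toAddValuation hp hpK hx₁ hx₂
  simp only [hv.toAddValuation_apply, ha, hμ, hpK, hx₁0,
    ne_eq, not_false_eq_true, ← WithTop.coe_nsmul, ← WithTop.coe_add, ← WithTop.coe_zero,
    WithTop.coe_lt_coe, nsmul_eq_mul] at hval
  replace hval := hval hneg hlead hvp'
  have hy : x₂ - μ * x₁ ≠ 0 := fun hy => by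
    rw [hy, ← AddValuation.map_pow, zero_pow hp.ne_zero, AddValuation.map_zero] at hval
    exact WithTop.top_ne_coe hval
  rw [hv.toAddValuation_apply hy, ← WithTop.coe_nsmul, WithTop.coe_inj, nsmul_eq_mul] at hval
  exact ⟨hy, by linear_combination p * hval + hvx₁⟩

end IsDiscVal

theorem statement8_general {p : ℕ} (hp : p.Prime) {K L : Type*} [Field K] [Field L] [CharZero L]
    [Algebra K L] {v₀ : K → ℤ} {v : L → ℤ} (hv : IsDiscVal v) {e : ℤ} (he : 0 < e)
    (hram : ∀ x : K, x ≠ 0 → v (algebraMap K L x) = e * v₀ x) {a μ : K} (ha : a ≠ 0) (hμ : μ ≠ 0)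
    (hneg : v₀ a < 0) (hvp : -(p * v₀ p) < (p - 1) * v₀ a)
    (hvμ : p ^ 2 * v₀ μ < (p ^ 2 - 1) * v₀ a) {x₁ x₂ : L} (hx₁ : x₁ ^ p - x₁ = algebraMap K L a)
    (hx₂ : x₂ ^ p - x₂ = algebraMap K L (μ ^ p * a) + wittCarry p x₁ (algebraMap K L a)) :
    x₂ - algebraMap K L μ * x₁ ≠ 0 ∧
      p ^ 2 * v (x₂ - algebraMap K L μ * x₁) = e * (p ^ 2 * v₀ μ + v₀ a) := by
  have hpK : (p : K) ≠ 0 := fun h => Nat.cast_ne_zero.2 hp.ne_zero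
    (by rw [← map_natCast (algebraMap K L), h, map_zero] : (p : L) = 0)
  have hva := hram a ha
  have hvμ' := hram μ hμ
  have hvp' : v p = e * v₀ p := by rw [← hram p hpK, map_natCast]
  rw [map_mul, map_pow] at hx₂
  obtain ⟨hy, hval⟩ := hv.sq_mul_map_sub_mul_of_witt hp ((map_ne_zero _).2 ha)
    ((map_ne_zero _).2 hμ) hx₁ hx₂ (hva ▸ mul_neg_of_pos_of_neg he hneg)
    (by rw [hva, hvp']; linear_combination e * hvp)
    (by rw [hva, hvμ']; linear_combination e * hvμ)
  exact ⟨hy, by rw [hval, hva, hvμ']; ring⟩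

/-- `y₂ = x₂ − μ·x₁` has valuation `v₂(y₂) = −b₂`. -/
theorem statement8
    (p : ℕ) (hp : p.Prime)
    (K0 K2 : Type*) [Field K0] [Field K2] [CharZero K0] [CharZero K2]
    [Algebra K0 K2] [IsGalois K0 K2] [FiniteDimensional K0 K2]
    (hdeg : Module.finrank K0 K2 = p ^ 2)
    (hcyc : IsCyclic (K2 ≃ₐ[K0] K2))
    (v0 : K0 → ℤ) (v2 : K2 → ℤ)
    (hv0 : IsDiscVal v0) (hv2 : IsDiscVal v2)
    (e0 : ℤ) (he0 : e0 = v0 (p : K0)) (he0pos : 1 ≤ e0)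
    (hram : ∀ x : K0, x ≠ 0 → v2 (algebraMap K0 K2 x) = (p : ℤ) ^ 2 * v0 x)
    (a1 μ a2 : K0) (ha1 : a1 ≠ 0) (hμ0 : μ ≠ 0)
    (hwitt : ∀ y : K0, y ^ p - y ≠ a1)
    (hnd : ¬ ((p : ℤ) ∣ v0 a1))
    (hneg : v0 a1 < 0)
    (hbd : -((p : ℤ) * e0) < ((p : ℤ) ^ 2 - 1) * v0 a1)
    (m : ℤ) (hm : m = -v0 μ) (hmpos : 0 < m)
    (hmu1 : (p : ℤ) ^ 2 * (p - 1) * m - (2 * p * (p - 1) + 1) * v0 a1 < (p : ℤ) ^ 2 * e0)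
    (hmu2 : -(((p : ℤ) ^ 2 - 1) * v0 a1) < (p : ℤ) ^ 2 * m)
    (ha2 : a2 = μ ^ p * a1)
    (x1 x2 : K2)
    (hx1 : x1 ^ p - x1 = algebraMap K0 K2 a1)
    (hx2 : x2 ^ p - x2 = algebraMap K0 K2 a2 +
      (x1 ^ p + (algebraMap K0 K2 a1) ^ p - (x1 + algebraMap K0 K2 a1) ^ p) / (p : K2))
    (hgen : Algebra.adjoin K0 {x1, x2} = ⊤)
    (b1 b2 : ℤ) (hb1 : b1 = -v0 a1) (hb2 : b2 = (p : ℤ) ^ 2 * m + b1) :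
    x2 - algebraMap K0 K2 μ * x1 ≠ 0 ∧
    v2 (x2 - algebraMap K0 K2 μ * x1) = -b2 := by
  subst he0 hm ha2 hb1 hb2
  have hbd' : ((p : ℤ) ^ 2 - 1) * v0 a1 ≤ (p - 1) * v0 a1 :=
    mul_le_mul_of_nonpos_right (by nlinarith [hp.one_lt]) hneg.le
  obtain ⟨hy, hval⟩ := statement8_general hp hv2 (by have := hp.pos; positivity) hram ha1 hμ0 hneg
    (hbd.trans_le hbd') (by linarith) hx1 hx2
  exact ⟨hy, by linarith [mul_left_cancel₀ (pow_ne_zero 2 (Nat.cast_ne_zero.2 hp.ne_zero)) hval]⟩
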